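/- Let P_GF, P_GB, σ², α, y, z, λ_GF, λ_GB > 0, let H_GF, H_GB be independent exponential random variables with means λ_GF and λ_GB, and set g_GF = P_GF·H_GF·y^{-α}, g_GB = P_GB·H_GB·z^{-α}. For 0 < t < 1, set c_t = t·σ²·y^α/((1-t)·P_GF), Ψ(t) = P_GF·y^{-α}·t·z^α/(λ_GB·P_GB) + 1/λ_GF, and k = P_GF·z^α/(λ_GB·P_GB·y^α). Then the joint coverage probability of the GB user under the dynamic protocol satisfies P( g_GB > t·(g_GF + σ²) and g_GF < g_GB ) = exp( -t·σ²·z^α/(λ_GB·P_GB) )·(1 - e^{-Ψ(t)·c_t})/(λ_GF·Ψ(t)) + exp( -(k + 1/λ_GF)·c_t )/( 1 + λ_GF·k ). -/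

import Mathlib

open MeasureTheory ProbabilityTheory Real Set

/-!
Conditionally on the interfering gain `X = H_GF`, both constraints are lower bounds on `H_GB` that
are affine in `X`. The exponential tail of `H_GB` therefore turns the coverage probability into the
Laplace-type integral of `exp (-s * max (a + b * x) (a' + b' * x))` against the law of `X`. The two
affine bounds cross at `c_t`, and on each side of it the integrand is a single exponential.
-/

section Exponential

variable {r : ℝ}

lemma measureReal_Ioi_expMeasure (hr : 0 < r) {x : ℝ} (hx : 0 ≤ x) :
    (expMeasure r).real (Ioi x) = exp (-(r * x)) := by
  have := isProbabilityMeasure_expMeasure hr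
  rw [← compl_Iic, probReal_compl_eq_one_sub measurableSet_Iic, ← cdf_eq_real,
    cdf_expMeasure_eq hr, if_pos hx, sub_sub_cancel]

lemma ae_pos_expMeasure (hr : 0 < r) : ∀ᵐ x ∂expMeasure r, 0 < x := by
  have := isProbabilityMeasure_expMeasure hr
  refine (mem_ae_iff_prob_eq_one measurableSet_Ioi).2 ?_
  rw [← ofReal_measureReal, measureReal_Ioi_expMeasure hr le_rfl, mul_zero, neg_zero, exp_zero,
    ENNReal.ofReal_one]

lemma hasLaw_expMeasure_of_tail {Ω : Type*} [MeasurableSpace Ω] {μ : Measure Ω}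
    [IsProbabilityMeasure μ] (hr : 0 < r) {X : Ω → ℝ} (hX : AEMeasurable X μ)
    (tail : ∀ s, 0 ≤ s → μ.real {ω | s < X ω} = exp (-(r * s))) :
    HasLaw X (expMeasure r) μ := by
  have := isProbabilityMeasure_expMeasure hr
  have : IsProbabilityMeasure (μ.map X) := Measure.isProbabilityMeasure_map hX
  have cdf_of_nonneg : ∀ s, 0 ≤ s → cdf (μ.map X) s = 1 - exp (-(r * s)) := fun s hs ↦ by
    rw [cdf_eq_real, ← compl_Ioi, probReal_compl_eq_one_sub measurableSet_Ioi,
      map_measureReal_apply_of_aemeasurable hX measurableSet_Ioi]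
    exact congrArg (1 - ·) (tail s hs)
  refine ⟨hX, Measure.eq_of_cdf _ _ ?_⟩
  ext x
  rw [cdf_expMeasure_eq hr]
  split_ifs with hx
  · exact cdf_of_nonneg x hx
  · have cdf_zero : cdf (μ.map X) 0 = 0 := by simp [cdf_of_nonneg 0 le_rfl]
    exact le_antisymm (cdf_zero ▸ monotone_cdf _ (le_of_not_ge hx)) (cdf_nonneg _ x)

lemma restrict_Ioi_expMeasure (r : ℝ) {c : ℝ} (hc : 0 ≤ c) :
    (expMeasure r).restrict (Ioi c) =
      (volume.restrict (Ioi c)).withDensity fun x ↦ ENNReal.ofReal (r * exp (-(r * x))) := by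
  rw [expMeasure, gammaMeasure, restrict_withDensity measurableSet_Ioi]
  refine withDensity_congr_ae ((ae_restrict_mem measurableSet_Ioi).mono fun x hx ↦ ?_)
  exact exponentialPDF_of_nonneg (hc.trans (le_of_lt hx))

lemma density_mul_exp_neg_affine (r p q x : ℝ) :
    r * exp (-(r * x)) * exp (-(p + q * x)) = r * exp (-p) * exp (-(r + q) * x) := by
  rw [mul_assoc, mul_assoc, ← exp_add, ← exp_add]
  ring_nf

variable {q c : ℝ}

lemma integrableOn_Ioi_exp_neg_affine_expMeasure (hr : 0 < r) (hq : 0 < r + q) (hc : 0 ≤ c)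
    (p : ℝ) : IntegrableOn (fun x ↦ exp (-(p + q * x))) (Ioi c) (expMeasure r) := by
  rw [IntegrableOn, restrict_Ioi_expMeasure r hc, integrable_withDensity_iff_integrable_smul'
    (by fun_prop) (.of_forall fun _ ↦ ENNReal.ofReal_lt_top)]
  simp only [ENNReal.toReal_ofReal (mul_pos hr (exp_pos _)).le, smul_eq_mul,
    density_mul_exp_neg_affine]
  exact (integrableOn_exp_mul_Ioi (neg_lt_zero.2 hq) c).const_mul _

lemma integral_Ioi_exp_neg_affine_expMeasure (hr : 0 < r) (hq : 0 < r + q) (hc : 0 ≤ c) (p : ℝ) :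
    ∫ x in Ioi c, exp (-(p + q * x)) ∂expMeasure r =
      r / (r + q) * exp (-p) * exp (-((r + q) * c)) := by
  rw [restrict_Ioi_expMeasure r hc, integral_withDensity_eq_integral_toReal_smul
    (by fun_prop) (.of_forall fun _ ↦ ENNReal.ofReal_lt_top)]
  simp only [ENNReal.toReal_ofReal (mul_pos hr (exp_pos _)).le, smul_eq_mul,
    density_mul_exp_neg_affine]
  rw [integral_const_mul, integral_exp_mul_Ioi (neg_lt_zero.2 hq), neg_div_neg_eq, neg_mul]
  ring

lemma integral_Ioc_exp_neg_affine_expMeasure (hr : 0 < r) (hq : 0 < r + q) (hc : 0 ≤ c) (p : ℝ) :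
    ∫ x in Ioc 0 c, exp (-(p + q * x)) ∂expMeasure r =
      r / (r + q) * exp (-p) * (1 - exp (-((r + q) * c))) := by
  have integrable_Ioi := integrableOn_Ioi_exp_neg_affine_expMeasure hr hq le_rfl p
  have split := setIntegral_union (Ioc_disjoint_Ioi_same (a := 0) (b := c)) measurableSet_Ioi
    (integrable_Ioi.mono_set Ioc_subset_Ioi_self)
    (integrableOn_Ioi_exp_neg_affine_expMeasure hr hq hc p)
  rw [Ioc_union_Ioi_eq_Ioi hc, integral_Ioi_exp_neg_affine_expMeasure hr hq le_rfl,
    integral_Ioi_exp_neg_affine_expMeasure hr hq hc, mul_zero, neg_zero, exp_zero] at split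
  linear_combination -split

lemma integral_exp_neg_max_affine_expMeasure {p p' q' : ℝ} (hr : 0 < r) (hq : 0 < r + q)
    (hqq' : q ≤ q') (hc : 0 ≤ c) (cross : p + q * c = p' + q' * c) :
    ∫ x, exp (-(max (p + q * x) (p' + q' * x))) ∂expMeasure r =
      r / (r + q) * exp (-p) * (1 - exp (-((r + q) * c))) +
        r / (r + q') * exp (-p') * exp (-((r + q') * c)) := by
  have hq' : 0 < r + q' := by linarith
  have eqOn_left : EqOn (fun x ↦ exp (-(max (p + q * x) (p' + q' * x))))
      (fun x ↦ exp (-(p + q * x))) (Ioc 0 c) := fun x hx ↦ by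
    have : p' + q' * x ≤ p + q * x := by
      linear_combination mul_le_mul_of_nonneg_left hx.2 (sub_nonneg.2 hqq') - cross
    simp only [max_eq_left this]
  have eqOn_right : EqOn (fun x ↦ exp (-(max (p + q * x) (p' + q' * x))))
      (fun x ↦ exp (-(p' + q' * x))) (Ioi c) := fun x hx ↦ by
    have : p + q * x ≤ p' + q' * x := by
      linear_combination mul_le_mul_of_nonneg_left (le_of_lt hx) (sub_nonneg.2 hqq') + cross
    simp only [max_eq_right this]
  have on_pos : (expMeasure r).restrict (Ioi 0) = expMeasure r :=
    Measure.restrict_eq_self_of_ae_mem (ae_pos_expMeasure hr)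
  rw [← on_pos, ← Ioc_union_Ioi_eq_Ioi hc,
    setIntegral_union Ioc_disjoint_Ioi_same measurableSet_Ioi,
    setIntegral_congr_fun measurableSet_Ioc eqOn_left,
    setIntegral_congr_fun measurableSet_Ioi eqOn_right,
    integral_Ioc_exp_neg_affine_expMeasure hr hq hc,
    integral_Ioi_exp_neg_affine_expMeasure hr hq' hc]
  · exact ((integrableOn_Ioi_exp_neg_affine_expMeasure hr hq le_rfl p).mono_set
      Ioc_subset_Ioi_self).congr_fun eqOn_left.symm measurableSet_Ioc
  · exact (integrableOn_Ioi_exp_neg_affine_expMeasure hr hq' hc p').congr_fun eqOn_right.symm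
      measurableSet_Ioi

end Exponential

section Independent

variable {Ω : Type*} [MeasurableSpace Ω] {μ : Measure Ω}

lemma measureReal_comp_lt_of_indepFun_expMeasure {S : Type*} [MeasurableSpace S] {ν : Measure S}
    {X : Ω → S} {Y : Ω → ℝ} {s : ℝ} (hs : 0 < s) (hX : HasLaw X ν μ)
    (hY : HasLaw Y (expMeasure s) μ) (hXY : IndepFun X Y μ) {G : S → ℝ} (hG : Measurable G)
    (hG_nonneg : ∀ᵐ x ∂ν, 0 ≤ G x) :
    μ.real {ω | G (X ω) < Y ω} = ∫ x, exp (-(s * G x)) ∂ν := by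
  have := isProbabilityMeasure_expMeasure hs
  have := hY.isProbabilityMeasure
  have region : MeasurableSet {p : S × ℝ | G p.1 < p.2} :=
    measurableSet_lt (hG.comp measurable_fst) measurable_snd
  have joint : HasLaw (fun ω ↦ (X ω, Y ω)) (ν.prod (expMeasure s)) μ :=
    (indepFun_iff_hasLaw_prodMk_prod hX hY).1 hXY
  rw [joint.measureReal_eq region, measureReal_def, Measure.prod_apply region, ← integral_toReal
    (measurable_measure_prodMk_left region).aemeasurable (.of_forall fun _ ↦ measure_lt_top _ _)]
  refine integral_congr_ae (hG_nonneg.mono fun x hx ↦ ?_)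
  change (expMeasure s).real (Ioi (G x)) = exp (-(s * G x))
  exact measureReal_Ioi_expMeasure hs hx

lemma measureReal_two_affine_lt_of_indepFun_expMeasure {X Y : Ω → ℝ} {r s a b a' b' c : ℝ}
    (hr : 0 < r) (hs : 0 < s) (hX : HasLaw X (expMeasure r) μ) (hY : HasLaw Y (expMeasure s) μ)
    (hXY : IndepFun X Y μ) (ha : 0 ≤ a) (hb : 0 ≤ b) (hbb' : b ≤ b') (hc : 0 ≤ c)
    (cross : a + b * c = a' + b' * c) :
    μ.real {ω | a + b * X ω < Y ω ∧ a' + b' * X ω < Y ω} =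
      r / (r + s * b) * exp (-(s * a)) * (1 - exp (-((r + s * b) * c))) +
        r / (r + s * b') * exp (-(s * a')) * exp (-((r + s * b') * c)) := by
  have max_nonneg : ∀ᵐ x ∂expMeasure r, 0 ≤ max (a + b * x) (a' + b' * x) :=
    (ae_pos_expMeasure hr).mono fun x hx ↦ le_max_of_le_left (by positivity)
  simp only [← max_lt_iff]
  rw [measureReal_comp_lt_of_indepFun_expMeasure hs hX hY hXY (by fun_prop) max_nonneg]
  simp only [mul_max_of_nonneg _ _ hs.le, mul_add, ← mul_assoc]
  exact integral_exp_neg_max_affine_expMeasure hr (by positivity)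
    (mul_le_mul_of_nonneg_left hbb' hs.le) hc (by linear_combination s * cross)

/-- The path losses `L_GF` and `L_GB` are arbitrary; the power law is `L_GF = y ^ α`,
`L_GB = z ^ α`. -/
theorem gb_joint_coverage_dynamic_protocol_general
    {P_GF P_GB σ2 L_GF L_GB lamGF lamGB t c_t ψ k : ℝ}
    (hPGF : 0 < P_GF) (hPGB : 0 < P_GB) (hσ2 : 0 ≤ σ2) (hLGF : 0 < L_GF) (hLGB : 0 < L_GB)
    (hlamGF : 0 < lamGF) (hlamGB : 0 < lamGB) {H_GF H_GB : Ω → ℝ}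
    (hGF : HasLaw H_GF (expMeasure lamGF⁻¹) μ) (hGB : HasLaw H_GB (expMeasure lamGB⁻¹) μ)
    (hind : IndepFun H_GF H_GB μ) (ht0 : 0 ≤ t) (ht1 : t < 1)
    (hct : c_t = t * σ2 * L_GF / ((1 - t) * P_GF))
    (hψ : ψ = P_GF * L_GF⁻¹ * t * L_GB / (lamGB * P_GB) + 1 / lamGF)
    (hk : k = P_GF * L_GB / (lamGB * P_GB * L_GF)) :
    μ.real {ω | t * (P_GF * H_GF ω * L_GF⁻¹ + σ2) < P_GB * H_GB ω * L_GB⁻¹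
        ∧ P_GF * H_GF ω * L_GF⁻¹ < P_GB * H_GB ω * L_GB⁻¹} =
      exp (-(t * σ2 * L_GB) / (lamGB * P_GB)) * (1 - exp (-(ψ * c_t))) / (lamGF * ψ) +
        exp (-((k + 1 / lamGF) * c_t)) / (1 + lamGF * k) := by
  have h1t : 0 < 1 - t := sub_pos.2 ht1
  -- The constraints in units of `H_GB`: received power is scaled by `m`, the gain `H_GF` by `b`.
  set m := L_GB / P_GB with hm
  set b := P_GF * L_GF⁻¹ * m with hb
  have hm_pos : 0 < m := by positivity
  have hb_pos : 0 < b := by positivity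
  have hc : 0 ≤ c_t := by rw [hct]; positivity
  have cross : t * σ2 * m + t * b * c_t = 0 + b * c_t := by
    rw [hct, hb]
    field_simp
    ring
  have event : {ω | t * (P_GF * H_GF ω * L_GF⁻¹ + σ2) < P_GB * H_GB ω * L_GB⁻¹
        ∧ P_GF * H_GF ω * L_GF⁻¹ < P_GB * H_GB ω * L_GB⁻¹} =
      {ω | t * σ2 * m + t * b * H_GF ω < H_GB ω ∧ 0 + b * H_GF ω < H_GB ω} := by
    have received ω : P_GB * H_GB ω * L_GB⁻¹ = H_GB ω / m := by rw [hm]; field_simp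
    ext ω
    simp only [mem_ofPred_eq, received, lt_div_iff₀ hm_pos, hb]
    ring_nf
  have rate_left : lamGF⁻¹ + lamGB⁻¹ * (t * b) = ψ := by rw [hψ, hb, hm]; field_simp; ring
  have rate_right : lamGF⁻¹ + lamGB⁻¹ * b = k + 1 / lamGF := by rw [hk, hb, hm]; field_simp; ring
  have noise : lamGB⁻¹ * (t * σ2 * m) = t * σ2 * L_GB / (lamGB * P_GB) := by rw [hm]; field_simp
  have hψ_pos : 0 < ψ := rate_left ▸ by positivity
  have hk_pos : 0 < k := by rw [hk]; positivity
  rw [event, measureReal_two_affine_lt_of_indepFun_expMeasure (inv_pos.2 hlamGF)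
    (inv_pos.2 hlamGB) hGF hGB hind (by positivity) (by positivity)
    (mul_le_of_le_one_left hb_pos.le ht1.le) hc cross, rate_left, rate_right, noise, mul_zero,
    neg_zero, exp_zero, mul_one, neg_div]
  congr 1
  · field_simp
  · field_simp
    ring

end Independent

/-- Exact conditional joint coverage probability of the GB user under the dynamic
protocol in the regime `γ_GB^{th} = t ∈ (0,1)` (Lemma 2, Appendix B): with independent
exponential channel gains `H_GF, H_GB` (means `lamGF, lamGB`), `g_GF = P_GF·H_GF·y⁻ᵅ`,
`g_GB = P_GB·H_GB·z⁻ᵅ`, `c_t = t·σ²·yᵅ/((1-t)·P_GF)`,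
`Ψ(t) = P_GF·y⁻ᵅ·t·zᵅ/(lamGB·P_GB) + 1/lamGF` and `k = P_GF·zᵅ/(lamGB·P_GB·yᵅ)`,
`P(g_GB > t·(g_GF + σ²) ∧ g_GF < g_GB)
  = exp(-t·σ²·zᵅ/(lamGB·P_GB))·(1 - e^{-Ψ(t)·c_t})/(lamGF·Ψ(t))
    + exp(-(k + 1/lamGF)·c_t)/(1 + lamGF·k)`. -/
theorem gb_joint_coverage_dynamic_protocol
    {Ω : Type*} [MeasurableSpace Ω] (μ : Measure Ω) [IsProbabilityMeasure μ]
    (P_GF P_GB σ2 α y z lamGF lamGB : ℝ)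
    (hPGF : 0 < P_GF) (hPGB : 0 < P_GB) (hσ2 : 0 < σ2) (hα : 0 < α)
    (hy : 0 < y) (hz : 0 < z) (hlamGF : 0 < lamGF) (hlamGB : 0 < lamGB)
    (H_GF H_GB : Ω → ℝ) (hmGF : Measurable H_GF) (hmGB : Measurable H_GB)
    (hind : IndepFun H_GF H_GB μ)
    (hGFexp : ∀ s : ℝ, 0 ≤ s → (μ {ω | s < H_GF ω}).toReal = Real.exp (-s / lamGF))
    (hGBexp : ∀ s : ℝ, 0 ≤ s → (μ {ω | s < H_GB ω}).toReal = Real.exp (-s / lamGB))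
    (t : ℝ) (ht0 : 0 < t) (ht1 : t < 1)
    (c_t : ℝ) (hct : c_t = t * σ2 * y ^ α / ((1 - t) * P_GF))
    (Ψ : ℝ → ℝ) (hΨ : ∀ u, Ψ u = P_GF * y ^ (-α) * u * z ^ α / (lamGB * P_GB) + 1 / lamGF)
    (k : ℝ) (hk : k = P_GF * z ^ α / (lamGB * P_GB * y ^ α)) :
    (μ {ω | t * (P_GF * H_GF ω * y ^ (-α) + σ2) < P_GB * H_GB ω * z ^ (-α)
          ∧ P_GF * H_GF ω * y ^ (-α) < P_GB * H_GB ω * z ^ (-α)}).toReal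
      = Real.exp (-(t * σ2 * z ^ α) / (lamGB * P_GB)) *
          (1 - Real.exp (-(Ψ t * c_t))) / (lamGF * Ψ t)
        + Real.exp (-((k + 1 / lamGF) * c_t)) / (1 + lamGF * k) := by
  have hGF : HasLaw H_GF (expMeasure lamGF⁻¹) μ :=
    hasLaw_expMeasure_of_tail (inv_pos.2 hlamGF) hmGF.aemeasurable fun s hs ↦
      (hGFexp s hs).trans (by ring_nf)
  have hGB : HasLaw H_GB (expMeasure lamGB⁻¹) μ :=
    hasLaw_expMeasure_of_tail (inv_pos.2 hlamGB) hmGB.aemeasurable fun s hs ↦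
      (hGBexp s hs).trans (by ring_nf)
  simp only [rpow_neg hy.le, rpow_neg hz.le] at hΨ ⊢
  exact gb_joint_coverage_dynamic_protocol_general hPGF hPGB hσ2.le (rpow_pos_of_pos hy α)
    (rpow_pos_of_pos hz α) hlamGF hlamGB hGF hGB hind ht0.le ht1 hct (hΨ t) hk
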